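/- Let M be a von Neumann algebra with no central summands of type I₁ and let ξ be a complex scalar with ξ ≠ 0 and ξ ≠ 1. If Φ : M → M is a nonlinear ξ-Lie derivation, then Φ is an additive derivation and Φ(ξT) = ξΦ(T) for all T ∈ M. -/

import Mathlib

variable {H : Type*} [NormedAddCommGroup H] [InnerProductSpace ℂ H] [CompleteSpace H]

/-- `P` is a projection (self-adjoint idempotent) belonging to the
von Neumann algebra `M`. -/
def VNProjection (M : VonNeumannAlgebra H) (P : H →L[ℂ] H) : Prop :=
  P ∈ M ∧ IsSelfAdjoint P ∧ P * P = P

/-- `Z` is a central projection of `M`: a projection in `M` commuting with every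
element of `M`. -/
def VNCentralProjection (M : VonNeumannAlgebra H) (Z : H →L[ℂ] H) : Prop :=
  VNProjection M Z ∧ ∀ T ∈ M, Z * T = T * Z

/-- `P` is core-free: the only central projection `Q` of `M` with `Q ≤ P` is `0`. -/
def VNCoreFree (M : VonNeumannAlgebra H) (P : H →L[ℂ] H) : Prop :=
  ∀ Q, VNCentralProjection M Q → Q * P = Q → Q = 0

/-- `Z` is the central carrier of `A`: the smallest central projection of `M`
with `Z * A = A`. -/
def VNCentralCarrier (M : VonNeumannAlgebra H) (A Z : H →L[ℂ] H) : Prop :=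
  VNCentralProjection M Z ∧ Z * A = A ∧
    ∀ Q, VNCentralProjection M Q → Q * A = A → Z * Q = Z

/-- `M` has no central summands of type I₁: for every nonzero central projection `Z`
there are `A, B ∈ M` with `Z * (A * B - B * A) ≠ 0`. -/
def VNNoTypeI1 (M : VonNeumannAlgebra H) : Prop :=
  ∀ Z, VNCentralProjection M Z → Z ≠ 0 → ∃ A ∈ M, ∃ B ∈ M, Z * (A * B - B * A) ≠ 0

set_option linter.unusedSectionVars false
set_option linter.unusedSimpArgs false
/-- Setup for the algebraic part. -/
structure XS {R : Type*} [Ring R] [Algebra ℂ R] (ξ : ℂ) (E e f : R) (Ψ : R → R) : Prop where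
  h0 : ξ ≠ 0
  h1 : ξ ≠ 1
  hsum : e + f = 1
  ee : e * e = e
  ff : f * f = f
  ef : e * f = 0
  fe : f * e = 0
  comm : ∀ x, E * x = x * E
  EΨ : ∀ x, E * Ψ x = Ψ x
  lie : ∀ A B, Ψ (A * B - ξ • (B * A)) =
        (Ψ A * B - ξ • (B * Ψ A)) + (A * Ψ B - ξ • (Ψ B * A))
  r12 : ∀ s, E * s = s → (∀ T, s * e * T * f = 0) → s * e = 0
  r21 : ∀ s, E * s = s → (∀ T, s * f * T * e = 0) → s * f = 0
  l12 : ∀ s, E * s = s → (∀ T, e * T * f * s = 0) → f * s = 0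
  l21 : ∀ s, E * s = s → (∀ T, f * T * e * s = 0) → e * s = 0
  sp : ∀ s : R, (∀ T, s * T * s = 0) → s = 0

namespace XS
variable {R : Type*} [Ring R] [Algebra ℂ R] {ξ : ℂ} {E e f : R} {Ψ : R → R}

theorem symm (h : XS ξ E e f Ψ) : XS ξ E f e Ψ :=
  ⟨h.h0, h.h1, by rw [add_comm]; exact h.hsum, h.ff, h.ee, h.fe, h.ef, h.comm, h.EΨ, h.lie,
    h.r21, h.r12, h.l21, h.l12, h.sp⟩

/-- additivity defect -/
def D (Ψ : R → R) (A B : R) : R := Ψ (A + B) - Ψ A - Ψ B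

theorem z (h : XS ξ E e f Ψ) : Ψ 0 = 0 := by
  have := h.lie 0 0
  simpa using this

theorem D0l (h : XS ξ E e f Ψ) (A : R) : D Ψ 0 A = 0 := by simp [D, h.z]
theorem D0r (h : XS ξ E e f Ψ) (A : R) : D Ψ A 0 = 0 := by simp [D, h.z]
theorem Dc (A B : R) : D Ψ A B = D Ψ B A := by simp [D, add_comm]; abel

theorem ED (h : XS ξ E e f Ψ) (A B : R) : E * D Ψ A B = D Ψ A B := by
  simp [D, mul_sub, h.EΨ]

theorem eqR (h : XS ξ E e f Ψ) (A B C : R) :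
    D Ψ (A * C - ξ • (C * A)) (B * C - ξ • (C * B)) = D Ψ A B * C - ξ • (C * D Ψ A B) := by
  have e1 : A * C - ξ • (C * A) + (B * C - ξ • (C * B)) = (A + B) * C - ξ • (C * (A + B)) := by
    simp only [add_mul, mul_add, smul_add]; abel
  unfold D
  rw [e1, h.lie, h.lie, h.lie]
  simp only [sub_mul, mul_sub, smul_sub, add_mul, mul_add, smul_add]; abel

theorem eqL (h : XS ξ E e f Ψ) (A B C : R) :
    D Ψ (C * A - ξ • (A * C)) (C * B - ξ • (B * C)) = C * D Ψ A B - ξ • (D Ψ A B * C) := by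
  have e1 : C * A - ξ • (A * C) + (C * B - ξ • (B * C)) = C * (A + B) - ξ • ((A + B) * C) := by
    simp only [add_mul, mul_add, smul_add]; abel
  unfold D
  rw [e1, h.lie, h.lie, h.lie]
  simp only [sub_mul, mul_sub, smul_sub, add_mul, mul_add, smul_add]; abel

theorem ee' (h : XS ξ E e f Ψ) (x : R) : e * (e * x) = e * x := by rw [← mul_assoc, h.ee]
theorem ff' (h : XS ξ E e f Ψ) (x : R) : f * (f * x) = f * x := by rw [← mul_assoc, h.ff]
theorem ef' (h : XS ξ E e f Ψ) (x : R) : e * (f * x) = 0 := by rw [← mul_assoc, h.ef, zero_mul]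
theorem fe' (h : XS ξ E e f Ψ) (x : R) : f * (e * x) = 0 := by rw [← mul_assoc, h.fe, zero_mul]

theorem dec (h : XS ξ E e f Ψ) (x : R) :
    x = e * x * e + e * x * f + f * x * e + f * x * f := by
  have : (e + f) * x * (e + f) = x := by rw [h.hsum]; simp
  nth_rw 1 [← this]
  simp only [add_mul, mul_add]; abel

/-- if `[e, X] = 0` then only the `ff` component survives -/
theorem onlyf (h : XS ξ E e f Ψ) (X : R) (hX : e * X - ξ • (X * e) = 0) :
    e * X * e = 0 ∧ e * X * f = 0 ∧ f * X * e = 0 := by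
  have h1 : (1 - ξ) ≠ 0 := sub_ne_zero.2 (Ne.symm h.h1)
  refine ⟨?_, ?_, ?_⟩
  · have := congrArg (fun y => e * y * e) hX
    simp only [mul_sub, sub_mul, mul_smul_comm, smul_mul_assoc, mul_assoc, h.ee, h.ee', mul_zero,
      zero_mul] at this
    have h2 : (1 - ξ) • (e * (X * e)) = 0 := by rw [sub_smul, one_smul]; exact this
    rw [mul_assoc]
    exact (smul_eq_zero.1 h2).resolve_left h1
  · have := congrArg (fun y => e * y * f) hX
    simpa only [mul_sub, sub_mul, mul_smul_comm, smul_mul_assoc, mul_assoc, h.ee, h.ee', h.ef,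
      mul_zero, zero_mul, smul_zero, sub_zero] using this
  · have := congrArg (fun y => f * y * e) hX
    simp only [mul_sub, sub_mul, mul_smul_comm, smul_mul_assoc, mul_assoc, h.ee, h.fe', h.fe,
      mul_zero, zero_mul, smul_zero, zero_sub, neg_mul, mul_neg, neg_eq_zero] at this
    rw [mul_assoc]
    exact (smul_eq_zero.1 this).resolve_left h.h0

theorem eq_ff (h : XS ξ E e f Ψ) (X : R) (hX : e * X - ξ • (X * e) = 0) : X = f * X * f := by
  obtain ⟨a, b, c⟩ := h.onlyf X hX
  nth_rw 1 [h.dec X]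
  rw [a, b, c]; simp

theorem eq_ee (h : XS ξ E e f Ψ) (X : R) (hX : f * X - ξ • (X * f) = 0) : X = e * X * e :=
  h.symm.eq_ff X hX

theorem eq_zero2 (h : XS ξ E e f Ψ) (X : R) (hX : e * X - ξ • (X * e) = 0)
    (hX' : f * X - ξ • (X * f) = 0) : X = 0 := by
  rw [h.eq_ff X hX, (h.symm.onlyf X hX').1]

/-- `L_f` kills `ee`-elements -/
theorem Lf_ee (h : XS ξ E e f Ψ) (A B : R) (h2 : D Ψ 0 (f * B - ξ • (B * f)) = 0 := by simp [h.D0l]) :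
    f * D Ψ (e * A * e) B - ξ • (D Ψ (e * A * e) B * f) = 0 := by
  rw [← h.eqL]
  simpa only [mul_assoc, h.fe', h.ef, mul_zero, smul_zero, sub_zero] using h2

/-- `D11 T12 = 0` conclusion -/
theorem kill_ee (h : XS ξ E e f Ψ) (X : R) (hE : E * X = X) (hX : X = e * X * e)
    (hT : ∀ T, X * (e * T * f) - ξ • ((e * T * f) * X) = 0) : X = 0 := by
  have key : X * e = 0 := by
    apply h.r12 X hE
    intro T
    have := hT T
    rw [hX] at this
    rw [hX]
    simpa only [mul_assoc, h.fe', h.ee', h.ee, mul_zero, smul_zero, sub_zero] using this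
  rw [hX, mul_assoc, key, mul_zero]

theorem kill_ee' (h : XS ξ E e f Ψ) (X : R) (hE : E * X = X) (hX : X = e * X * e)
    (hT : ∀ T, (f * T * e) * X - ξ • (X * (f * T * e)) = 0) : X = 0 := by
  have key : e * X = 0 := by
    apply h.l21 X hE
    intro T
    have := hT T
    rw [hX] at this
    rw [hX]
    simpa only [mul_assoc, h.ef', h.ef, h.ee', h.ee, mul_zero, smul_zero, sub_zero] using this
  rw [hX, key, zero_mul]

theorem g1 (h : XS ξ E e f Ψ) (A B : R) : D Ψ (e * A * e) (e * B * f) = 0 := by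
  refine h.kill_ee _ (h.ED _ _) (h.eq_ee _ (h.Lf_ee A _)) fun T => ?_
  rw [← h.eqR]
  have : e * B * f * (e * T * f) - ξ • (e * T * f * (e * B * f)) = 0 := by
    simp only [mul_assoc, h.fe', mul_zero, smul_zero, sub_zero]
  rw [this, h.D0r]

theorem g1' (h : XS ξ E e f Ψ) (A B : R) : D Ψ (e * A * e) (f * B * e) = 0 := by
  refine h.kill_ee' _ (h.ED _ _) (h.eq_ee _ (h.Lf_ee A _)) fun T => ?_
  rw [← h.eqL]
  have : f * T * e * (f * B * e) - ξ • (f * B * e * (f * T * e)) = 0 := by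
    simp only [mul_assoc, h.ef', mul_zero, smul_zero, sub_zero]
  rw [this, h.D0r]

theorem g2 (h : XS ξ E e f Ψ) (A B C : R) :
    D Ψ (e * A * e + e * B * f) (f * C * f) = 0 := by
  apply h.eq_zero2
  · rw [← h.eqL]
    have : e * (f * C * f) - ξ • (f * C * f * e) = 0 := by
      simp only [mul_assoc, h.fe, h.ef', mul_zero, smul_zero, sub_zero]
    rw [this, h.D0r]
  · rw [← h.eqL, Dc]
    have e1 : f * (f * C * f) - ξ • (f * C * f * f) = f * (C - ξ • C) * f := by
      simp only [mul_assoc, h.ff, h.ff', mul_sub, sub_mul, mul_smul_comm, smul_mul_assoc]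
    have e2 : f * (e * A * e + e * B * f) - ξ • ((e * A * e + e * B * f) * f)
        = e * (-ξ • B) * f := by
      simp only [mul_assoc, h.ff, h.fe', h.ef, mul_add, add_mul, mul_smul_comm, smul_mul_assoc,
        mul_zero, zero_add, add_zero, zero_sub, neg_smul, mul_neg, neg_mul]
    rw [e1, e2]
    exact h.symm.g1' _ _

theorem add_of_D {A B : R} (hd : D Ψ A B = 0) : Ψ (A + B) = Ψ A + Ψ B := by
  unfold D at hd
  rw [sub_sub, sub_eq_zero] at hd
  exact hd

theorem D_of_add {A B : R} (hd : Ψ (A + B) = Ψ A + Ψ B) : D Ψ A B = 0 := by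
  unfold D
  rw [hd]; abel

/-- off-diagonal component of something commuting -/
theorem off (h : XS ξ E e f Ψ) (X : R) (hE : E * X = X)
    (hT : ∀ T, X * (e * T * f) - ξ • ((e * T * f) * X) = 0) : f * X * e = 0 := by
  apply h.r12 (f * X)
  · rw [← mul_assoc, h.comm, mul_assoc, hE]
  intro T
  have := congrArg (fun y => f * y) (hT T)
  simpa only [mul_sub, mul_smul_comm, mul_assoc, h.fe', mul_zero, smul_zero, sub_zero] using this

theorem g3_aux (h : XS ξ E e f Ψ) (hx : ξ ^ 2 ≠ 1) (X : R) (hE : E * X = X)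
    (hT : ∀ T, X * (e * T * f) - ξ • ((e * T * f) * X) = 0)
    (hT' : ∀ T, (e * T * f) * X - ξ • (X * (e * T * f)) = 0) : e * X * e = 0 := by
  apply h.r12 (e * X)
  · rw [← mul_assoc, h.comm, mul_assoc, hE]
  intro T
  have h1 := congrArg (fun y => e * y * f) (hT T)
  have h2 := congrArg (fun y => e * y * f) (hT' T)
  simp only [mul_sub, sub_mul, mul_smul_comm, smul_mul_assoc, mul_assoc, h.ee', h.ff, mul_zero,
    zero_mul] at h1 h2 ⊢
  have h3 : (1 - ξ ^ 2) • (e * (X * (e * (T * f)))) = 0 := by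
    rw [sub_eq_zero] at h1 h2
    rw [sub_smul, one_smul, sub_eq_zero, pow_two, mul_smul, ← h2, ← h1]
  exact (smul_eq_zero.1 h3).resolve_left (sub_ne_zero.2 (Ne.symm hx))

theorem g3 (h : XS ξ E e f Ψ) (A B : R) : D Ψ (e * A * f) (f * B * e) = 0 := by
  set X := D Ψ (e * A * f) (f * B * e) with hXd
  have hE : E * X = X := h.ED _ _
  have k1 : ∀ T, X * (e * T * f) - ξ • ((e * T * f) * X) = 0 := fun T => by
    rw [hXd, ← h.eqR]
    simp only [mul_assoc, h.fe', mul_zero, smul_zero, sub_zero, h.D0l]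
  have k2 : ∀ T, (e * T * f) * X - ξ • (X * (e * T * f)) = 0 := fun T => by
    rw [hXd, ← h.eqL]
    simp only [mul_assoc, h.fe', mul_zero, smul_zero, sub_zero, h.D0l]
  have k3 : ∀ T, X * (f * T * e) - ξ • ((f * T * e) * X) = 0 := fun T => by
    rw [hXd, ← h.eqR]
    simp only [mul_assoc, h.ef', mul_zero, smul_zero, sub_zero, h.D0r]
  have k4 : ∀ T, (f * T * e) * X - ξ • (X * (f * T * e)) = 0 := fun T => by
    rw [hXd, ← h.eqL]
    simp only [mul_assoc, h.ef', mul_zero, smul_zero, sub_zero, h.D0r]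
  have o1 : f * X * e = 0 := h.off X hE k1
  have o2 : e * X * f = 0 := h.symm.off X hE k3
  have o34 : e * X * e = 0 ∧ f * X * f = 0 := by
    by_cases hx : ξ ^ 2 = 1
    · have hm : ξ = -1 := (by rcases mul_eq_zero.1 (show (ξ - 1) * (ξ + 1) = 0 by linear_combination hx) with h' | h'; exacts [Or.inl (sub_eq_zero.1 h'), Or.inr (eq_neg_of_add_eq_zero_left h')] : ξ = 1 ∨ ξ = -1).resolve_left h.h1
      have l1 : e * X - ξ • (X * e) = X := by
        conv_rhs => rw [hXd]
        rw [hXd, ← h.eqL]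
        simp only [mul_assoc, h.ee, h.ee', h.ef', h.fe, mul_zero, smul_zero, sub_zero, hm,
          zero_sub, neg_smul, one_smul, neg_neg]
      have l2 : f * X - ξ • (X * f) = X := by
        conv_rhs => rw [hXd]
        rw [hXd, ← h.eqL]
        simp only [mul_assoc, h.ff, h.ff', h.fe', h.ef, mul_zero, smul_zero, sub_zero, hm,
          zero_sub, neg_smul, one_smul, neg_neg]
      constructor
      · have := congrArg (fun y => e * y * e) l1
        simpa only [mul_sub, sub_mul, mul_smul_comm, smul_mul_assoc, mul_assoc, h.ee', h.ee, hm,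
          neg_smul, one_smul, sub_neg_eq_add, mul_add, add_mul, add_eq_right] using this
      · have := congrArg (fun y => f * y * f) l2
        simpa only [mul_sub, sub_mul, mul_smul_comm, smul_mul_assoc, mul_assoc, h.ff', h.ff, hm,
          neg_smul, one_smul, sub_neg_eq_add, mul_add, add_mul, add_eq_right] using this
    · exact ⟨h.g3_aux hx X hE k1 k2, h.symm.g3_aux hx X hE k3 k4⟩
  rw [h.dec X, o1, o2, o34.1, o34.2]; simp

theorem g4 (h : XS ξ E e f Ψ) (A B C : R) :
    D Ψ (e * A * e) (e * B * f + f * C * e) = 0 := by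
  refine h.kill_ee _ (h.ED _ _) (h.eq_ee _ (h.Lf_ee A _)) fun T => ?_
  rw [← h.eqR]
  have e1 : e * A * e * (e * T * f) - ξ • (e * T * f * (e * A * e)) = e * (A * e * T) * f := by
    simp only [mul_assoc, h.fe', h.ee', mul_zero, smul_zero, sub_zero]
  have e2 : (e * B * f + f * C * e) * (e * T * f) - ξ • (e * T * f * (e * B * f + f * C * e))
      = e * (-ξ • (T * f * C)) * e + f * (C * e * T) * f := by
    simp only [add_mul, mul_add, mul_assoc, h.fe', h.ee', h.ff', mul_zero, smul_zero,
      zero_add, mul_smul_comm, smul_mul_assoc, neg_smul, mul_neg, neg_mul]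
    abel
  rw [e1, e2]
  apply D_of_add
  have a1 := add_of_D (h.g2 (-ξ • (T * f * C)) (A * e * T) (C * e * T))
  have a2 := add_of_D (h.g2 (-ξ • (T * f * C)) 0 (C * e * T))
  have a3 := add_of_D (h.g1 (-ξ • (T * f * C)) (A * e * T))
  simp only [mul_zero, zero_mul, add_zero] at a2
  rw [a2, ← add_assoc, add_comm (e * (A * e * T) * f), a1, a3]
  abel

theorem g5 (h : XS ξ E e f Ψ) (A B C G : R) :
    D Ψ (f * G * f) (e * A * e + (e * B * f + f * C * e)) = 0 := by
  rw [Dc]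
  apply h.eq_zero2
  · rw [← h.eqL]
    have : e * (f * G * f) - ξ • (f * G * f * e) = 0 := by
      simp only [mul_assoc, h.fe, h.ef', mul_zero, smul_zero, sub_zero]
    rw [this, h.D0r]
  · rw [← h.eqL, Dc]
    have e1 : f * (f * G * f) - ξ • (f * G * f * f) = f * (G - ξ • G) * f := by
      simp only [mul_assoc, h.ff, h.ff', mul_sub, sub_mul, mul_smul_comm, smul_mul_assoc]
    have e2 : f * (e * A * e + (e * B * f + f * C * e))
        - ξ • ((e * A * e + (e * B * f + f * C * e)) * f)
        = f * C * e + e * (-ξ • B) * f := by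
      simp only [mul_assoc, h.ff, h.ff', h.fe', h.ef, mul_add, add_mul, mul_smul_comm,
        smul_mul_assoc, mul_zero, zero_add, add_zero, neg_smul, mul_neg, neg_mul]
      abel
    rw [e1, e2]
    exact h.symm.g4 _ _ _

theorem full (h : XS ξ E e f Ψ) (A B C G : R) :
    Ψ (e * A * e + e * B * f + f * C * e + f * G * f)
      = Ψ (e * A * e) + Ψ (e * B * f) + Ψ (f * C * e) + Ψ (f * G * f) := by
  have a1 := add_of_D (h.g5 A B C G)
  rw [add_of_D (h.g4 A B C), add_of_D (h.g3 B C)] at a1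
  have : e * A * e + e * B * f + f * C * e + f * G * f
    = f * G * f + (e * A * e + (e * B * f + f * C * e)) := by abel
  rw [this, a1]; abel

theorem a12 (h : XS ξ E e f Ψ) (A B : R) : Ψ (e * (A + B) * f) = Ψ (e * A * f) + Ψ (e * B * f) := by
  have p1 : Ψ (e + e * A * f) = Ψ e + Ψ (e * A * f) := by
    have := add_of_D (h.g1 1 A)
    simpa only [mul_one, h.ee] using this
  have p2 : Ψ (f + e * B * f) = Ψ f + Ψ (e * B * f) := by
    have := add_of_D (h.symm.g1' 1 B)
    simpa only [mul_one, h.ff] using this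
  have q := h.lie (e + e * A * f) (f + e * B * f)
  have q1 := h.lie e f
  have q2 := h.lie e (e * B * f)
  have q3 := h.lie (e * A * f) f
  have q4 := h.lie (e * A * f) (e * B * f)
  rw [p1, p2] at q
  have c0 : (e + e * A * f) * (f + e * B * f) - ξ • ((f + e * B * f) * (e + e * A * f))
      = e * (A + B) * f := by
    simp only [add_mul, mul_add, mul_assoc, h.fe', h.ee', h.ff, h.fe, h.ef, mul_zero, smul_zero,
      zero_add, add_zero, sub_zero]
  have c1 : e * f - ξ • (f * e) = 0 := by simp [h.ef, h.fe]
  have c2 : e * (e * B * f) - ξ • (e * B * f * e) = e * B * f := by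
    simp only [mul_assoc, h.ee', h.fe, mul_zero, smul_zero, sub_zero]
  have c3 : e * A * f * f - ξ • (f * (e * A * f)) = e * A * f := by
    simp only [mul_assoc, h.ff, h.fe', smul_zero, sub_zero]
  have c4 : e * A * f * (e * B * f) - ξ • (e * B * f * (e * A * f)) = 0 := by
    simp only [mul_assoc, h.fe', mul_zero, smul_zero, sub_zero]
  rw [c0] at q
  rw [c1, h.z] at q1
  rw [c2] at q2
  rw [c3] at q3
  rw [c4, h.z] at q4
  calc Ψ (e * (A + B) * f) = _ := q
    _ = (Ψ (e * A * f) * f - ξ • (f * Ψ (e * A * f)) + (e * A * f * Ψ f - ξ • (Ψ f * (e * A * f))))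
      + (Ψ e * (e * B * f) - ξ • (e * B * f * Ψ e)
        + (e * Ψ (e * B * f) - ξ • (Ψ (e * B * f) * e)))
      + (Ψ e * f - ξ • (f * Ψ e) + (e * Ψ f - ξ • (Ψ f * e)))
      + (Ψ (e * A * f) * (e * B * f) - ξ • (e * B * f * Ψ (e * A * f)) +
        (e * A * f * Ψ (e * B * f) - ξ • (Ψ (e * B * f) * (e * A * f)))) := by
        simp only [add_mul, mul_add, smul_add]; abel
    _ = _ := by rw [← q1, ← q2, ← q3, ← q4, add_zero, add_zero]

theorem a11 (h : XS ξ E e f Ψ) (A B : R) : Ψ (e * (A + B) * e) = Ψ (e * A * e) + Ψ (e * B * e) := by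
  have : D Ψ (e * A * e) (e * B * e) = 0 := by
    refine h.kill_ee _ (h.ED _ _) (h.eq_ee _ (h.Lf_ee A _)) fun T => ?_
    rw [← h.eqR]
    have e1 : ∀ A, e * A * e * (e * T * f) - ξ • (e * T * f * (e * A * e))
        = e * (A * e * T) * f := fun A => by
      simp only [mul_assoc, h.fe', h.ee', mul_zero, smul_zero, sub_zero]
    rw [e1, e1]
    apply D_of_add
    rw [← h.a12]
    simp only [mul_add, add_mul]
  rw [← add_of_D this]
  simp only [mul_add, add_mul]

theorem additive (h : XS ξ E e f Ψ) (A B : R) : Ψ (A + B) = Ψ A + Ψ B := by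
  have F : ∀ A, Ψ A = Ψ (e * A * e) + Ψ (e * A * f) + Ψ (f * A * e) + Ψ (f * A * f) := fun A => by
    rw [← h.full, ← h.dec]
  rw [F (A + B), F A, F B, h.a11, h.a12, h.symm.a11, h.symm.a12]
  abel


theorem neg (h : XS ξ E e f Ψ) (A : R) : Ψ (-A) = -Ψ A := by
  have := h.additive A (-A)
  rw [add_neg_cancel, h.z] at this
  exact (neg_eq_of_add_eq_zero_right this.symm).symm

theorem sub (h : XS ξ E e f Ψ) (A B : R) : Ψ (A - B) = Ψ A - Ψ B := by
  rw [sub_eq_add_neg, h.additive, h.neg, sub_eq_add_neg]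

/-- derivation defect -/
def δ (Ψ : R → R) (A B : R) : R := Ψ (A * B) - Ψ A * B - A * Ψ B
/-- homogeneity defect -/
def τ (ξ : ℂ) (Ψ : R → R) (A : R) : R := Ψ (ξ • A) - ξ • Ψ A

theorem δτ (h : XS ξ E e f Ψ) (A B : R) : δ Ψ A B = τ ξ Ψ (B * A) + ξ • δ Ψ B A := by
  have := h.lie A B
  rw [h.sub, sub_eq_iff_eq_add] at this
  unfold δ τ
  rw [this]
  simp only [smul_sub]; abel

theorem cocyc (Ψ : R → R) (A B C : R) :
    A * δ Ψ B C - δ Ψ (A * B) C + δ Ψ A (B * C) - δ Ψ A B * C = 0 := by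
  unfold δ
  simp only [mul_sub, sub_mul, mul_assoc]; abel

theorem τ0 (h : XS ξ E e f Ψ) (hx : ξ ^ 2 ≠ 1) (A : R) : τ ξ Ψ A = 0 := by
  have hp : (1 + ξ) ≠ 0 := fun h' => hx (by linear_combination (ξ - 1) * h')
  have k : ∀ A B, (1 - ξ ^ 2) • δ Ψ A B = τ ξ Ψ (B * A) + ξ • τ ξ Ψ (A * B) := fun A B => by
    have a := h.δτ A B
    have b := h.δτ B A
    rw [b, smul_add] at a
    rw [sub_smul, one_smul, pow_two, mul_smul]
    rw [sub_eq_iff_eq_add, add_assoc]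
    exact a
  have c : ∀ A B C, A * τ ξ Ψ (C * B) + ξ • (A * τ ξ Ψ (B * C)) - τ ξ Ψ (C * (A * B))
      + τ ξ Ψ (B * C * A) - τ ξ Ψ (B * A) * C - ξ • (τ ξ Ψ (A * B) * C) = 0 := fun A B C => by
    have := congrArg (fun y => (1 - ξ ^ 2) • y) (cocyc Ψ A B C)
    simp only [smul_sub, smul_add, smul_zero, ← mul_smul_comm] at this
    rw [mul_smul_comm _ (δ Ψ A B) C, ← smul_mul_assoc, k, k, k, k] at this
    rw [← this]
    simp only [mul_add, add_mul, mul_smul_comm, smul_mul_assoc, mul_assoc]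
    abel
  have m1 : ∀ A B, τ ξ Ψ (A * B) = A * τ ξ Ψ B := fun A B => by
    have := c A B 1
    simp only [one_mul, mul_one] at this
    have h2 : (1 + ξ) • (A * τ ξ Ψ B - τ ξ Ψ (A * B)) = 0 := by
      rw [← this]; simp only [add_smul, one_smul, smul_sub]; abel
    exact (sub_eq_zero.1 ((smul_eq_zero.1 h2).resolve_left hp)).symm
  have m2 : ∀ A B, τ ξ Ψ (A * B) = τ ξ Ψ A * B := fun A B => by
    have := c 1 A B
    simp only [one_mul, mul_one] at this
    have h2 : (1 + ξ) • (τ ξ Ψ (A * B) - τ ξ Ψ A * B) = 0 := by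
      rw [← this]; simp only [add_smul, one_smul, smul_sub]; abel
    exact (sub_eq_zero.1 ((smul_eq_zero.1 h2).resolve_left hp))
  set s := τ ξ Ψ 1 with hs
  have hl : ∀ A, τ ξ Ψ A = A * s := fun A => by rw [hs, ← m1, mul_one]
  have hr : ∀ A, τ ξ Ψ A = s * A := fun A => by rw [hs, ← m2, one_mul]
  have hE : E * s = s := by
    rw [hs]; unfold τ
    rw [mul_sub, mul_smul_comm, h.EΨ, h.EΨ]
  have q : ∀ A B C, s * ((A * C - C * A) * B - B * (A * C - C * A)) = 0 := fun A B C => by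
    have := c A B C
    rw [← m1, ← m1, ← m2, ← m2] at this
    simp only [hr] at this
    rw [← this]
    simp only [mul_sub, sub_mul, mul_assoc]; abel
  have s1 : s * e = 0 := h.r12 s hE fun T => by
    have := q e f (e * T * f)
    simpa only [mul_sub, sub_mul, mul_assoc, h.ee', h.ee, h.ef, h.fe', h.fe, h.ff, mul_zero,
      sub_zero] using this
  have s2 : s * f = 0 := h.r21 s hE fun T => by
    have := q f e (f * T * e)
    simpa only [mul_sub, sub_mul, mul_assoc, h.ff', h.ee, h.ef, h.ef', h.fe, h.ff, mul_zero,
      sub_zero] using this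
  have s0 : s = 0 := by rw [← mul_one s, ← h.hsum, mul_add, s1, s2, add_zero]
  rw [hl, s0, mul_zero]

theorem δ0 (h : XS ξ E e f Ψ) (hx : ξ ^ 2 ≠ 1) (A B : R) : δ Ψ A B = 0 := by
  have a := h.δτ A B
  rw [h.δτ B A, h.τ0 hx, h.τ0 hx, zero_add, zero_add, ← mul_smul, ← pow_two] at a
  have : (1 - ξ ^ 2) • δ Ψ A B = 0 := by
    rw [sub_smul, one_smul, ← a, sub_self]
  exact (smul_eq_zero.1 this).resolve_left (sub_ne_zero.2 (Ne.symm hx))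

/-! Jordan case -/

theorem two (X : R) (hX : X + X = 0) : X = 0 := by
  have : (2 : ℂ) • X = 0 := by rw [two_smul, hX]
  exact (smul_eq_zero.1 this).resolve_left two_ne_zero

theorem two' {X Y : R} (hX : X + X = Y + Y) : X = Y := by
  apply sub_eq_zero.1
  apply two
  rw [show X - Y + (X - Y) = (X + X) - (Y + Y) by abel, hX, sub_self]

theorem jor (h : XS (-1) E e f Ψ) (A B : R) :
    Ψ (A * B) + Ψ (B * A) = Ψ A * B + B * Ψ A + A * Ψ B + Ψ B * A := by
  have := h.lie A B
  simp only [neg_smul, one_smul, sub_neg_eq_add] at this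
  rw [← h.additive, this]; abel

theorem sq (h : XS (-1) E e f Ψ) (A : R) : Ψ (A * A) = Ψ A * A + A * Ψ A := by
  apply two'
  rw [h.jor]; abel

theorem aba (h : XS (-1) E e f Ψ) (A B : R) :
    Ψ (A * B * A) = Ψ A * B * A + A * Ψ B * A + A * B * Ψ A := by
  apply two'
  have a := h.jor A (A * B + B * A)
  have b := h.jor (A * A) B
  have c := h.jor A B
  rw [← h.additive] at c
  rw [h.sq, ← h.additive] at b
  rw [c, ← h.additive] at a
  rw [← h.additive]
  have : A * B * A + A * B * A = (A * (A * B + B * A) + (A * B + B * A) * A)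
     - (A * A * B + B * (A * A)) := by
    simp only [mul_add, add_mul, mul_assoc]; abel
  rw [this, h.sub, a, b]
  simp only [mul_add, add_mul, mul_assoc]; abel

theorem abc (h : XS (-1) E e f Ψ) (A B C : R) :
    Ψ (A * B * C) + Ψ (C * B * A) = Ψ A * B * C + A * Ψ B * C + A * B * Ψ C
      + (Ψ C * B * A + C * Ψ B * A + C * B * Ψ A) := by
  have a := h.aba (A + C) B
  have b := h.aba A B
  have c := h.aba C B
  have : (A + C) * B * (A + C) = A * B * A + C * B * C + (A * B * C + C * B * A) := by
    simp only [mul_add, add_mul]; abel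
  rw [this, h.additive, h.additive (A * B * A), b, c, h.additive A C] at a
  rw [← h.additive, eq_sub_of_add_eq' a]
  simp only [mul_add, add_mul]; abel

theorem δa (h : XS (-1) E e f Ψ) (A B : R) : δ Ψ B A = - δ Ψ A B := by
  have := h.jor A B
  rw [← sub_eq_zero] at this
  rw [eq_neg_iff_add_eq_zero, ← this]; unfold δ; abel

theorem bre (h : XS (-1) E e f Ψ) (A B X : R) :
    δ Ψ A B * X * (A * B - B * A) + (A * B - B * A) * X * δ Ψ A B = 0 := by
  have a := h.abc (A * B) X (B * A)
  have b := h.aba A (B * X * B)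
  have c := h.aba B (A * X * A)
  rw [h.aba B X] at b
  rw [h.aba A X] at c
  have e1 : A * B * X * (B * A) = A * (B * X * B) * A := by simp only [mul_assoc]
  have e2 : B * A * X * (A * B) = B * (A * X * A) * B := by simp only [mul_assoc]
  rw [e1, e2, b, c, ← sub_eq_zero] at a
  have d := h.δa A B
  have e3 : Ψ (A * B) = δ Ψ A B + Ψ A * B + A * Ψ B := by unfold δ; abel
  have e4 : Ψ (B * A) = - δ Ψ A B + Ψ B * A + B * Ψ A := by rw [← d]; unfold δ; abel
  rw [e3, e4] at a
  rw [← a]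
  simp only [mul_add, add_mul, mul_sub, sub_mul, mul_neg, neg_mul, mul_assoc]; abel

theorem sp2 (h : XS ξ E e f Ψ) (a b : R) (hab : ∀ X, a * X * b + b * X * a = 0) (X : R) :
    a * X * b = 0 := by
  apply h.sp
  intro T
  have k : ∀ X, b * X * a = - (a * X * b) := fun X => eq_neg_of_add_eq_zero_right (hab X)
  apply two
  have e1 : a * X * b * T * (a * X * b) = - (a * X * b * T * (a * X * b)) := by
    calc a * X * b * T * (a * X * b) = a * X * (b * T * a) * X * b := by simp only [mul_assoc]
      _ = - (a * (X * a * T) * b * X * b) := by rw [k]; simp only [mul_assoc, mul_neg, neg_mul]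
      _ = b * (X * a * T) * a * X * b := by rw [k]; simp only [neg_mul]
      _ = (b * X * a) * T * a * X * b := by simp only [mul_assoc]
      _ = _ := by rw [k]; simp only [mul_assoc, neg_mul]
  nth_rw 1 [e1]
  simp

theorem δadd1 (h : XS ξ E e f Ψ) (A A' B : R) : δ Ψ (A + A') B = δ Ψ A B + δ Ψ A' B := by
  unfold δ
  rw [h.additive, add_mul, h.additive, add_mul, add_mul]; abel

theorem δadd2 (h : XS ξ E e f Ψ) (A B B' : R) : δ Ψ A (B + B') = δ Ψ A B + δ Ψ A B' := by
  unfold δ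
  rw [h.additive, mul_add, h.additive, mul_add, mul_add]; abel

theorem br1 (h : XS (-1) E e f Ψ) (A B X : R) : δ Ψ A B * X * (A * B - B * A) = 0 :=
  h.sp2 _ _ (h.bre A B) X

theorem br1' (h : XS (-1) E e f Ψ) (A B X : R) : (A * B - B * A) * X * δ Ψ A B = 0 :=
  h.sp2 _ _ (fun Y => by rw [add_comm]; exact h.bre A B Y) X

theorem br2 (h : XS (-1) E e f Ψ) (A B C X : R) : δ Ψ A B * X * (C * B - B * C) = 0 := by
  have k : ∀ X, δ Ψ A B * X * (C * B - B * C) = - (δ Ψ C B * X * (A * B - B * A)) := fun X => by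
    have := h.br1 (A + C) B X
    rw [h.δadd1] at this
    rw [eq_neg_iff_add_eq_zero]
    calc _ = (δ Ψ A B + δ Ψ C B) * X * ((A + C) * B - B * (A + C))
          - δ Ψ A B * X * (A * B - B * A) - δ Ψ C B * X * (C * B - B * C) := by
            simp only [mul_add, add_mul, mul_sub, mul_assoc]; abel
      _ = 0 := by rw [this, h.br1, h.br1]; simp
  apply h.sp
  intro T
  calc _ = δ Ψ A B * X * (C * B - B * C) * T * (δ Ψ A B * X * (C * B - B * C)) := rfl
    _ = - (δ Ψ A B * X * ((C * B - B * C) * T * δ Ψ C B) * X * (A * B - B * A)) := by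
      rw [k X]
      nth_rw 1 [← neg_eq_iff_eq_neg.2 (k X)]
      simp only [mul_neg, neg_mul, neg_neg, mul_assoc]
    _ = 0 := by rw [h.br1']; simp

theorem br3 (h : XS (-1) E e f Ψ) (A B C G X : R) : δ Ψ A B * X * (C * G - G * C) = 0 := by
  have k : ∀ X, δ Ψ A B * X * (C * G - G * C) = - (δ Ψ A G * X * (C * B - B * C)) := fun X => by
    have := h.br2 A (B + G) C X
    rw [h.δadd2] at this
    rw [eq_neg_iff_add_eq_zero]
    calc _ = (δ Ψ A B + δ Ψ A G) * X * (C * (B + G) - (B + G) * C)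
          - δ Ψ A B * X * (C * B - B * C) - δ Ψ A G * X * (C * G - G * C) := by
            simp only [mul_add, add_mul, mul_sub, mul_assoc]; abel
      _ = 0 := by rw [this, h.br2, h.br2]; simp
  have br2' : ∀ X, (C * G - G * C) * X * δ Ψ A G = 0 := fun X => by
    apply h.sp
    intro T
    calc _ = (C * G - G * C) * X * (δ Ψ A G * T * (C * G - G * C)) * X * δ Ψ A G := by
          simp only [mul_assoc]
      _ = 0 := by rw [h.br2]; simp
  apply h.sp
  intro T
  calc _ = δ Ψ A B * X * (C * G - G * C) * T * (δ Ψ A B * X * (C * G - G * C)) := rfl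
    _ = - (δ Ψ A B * X * ((C * G - G * C) * T * δ Ψ A G) * X * (C * B - B * C)) := by
      nth_rw 2 [k X]
      simp only [mul_neg, mul_assoc]
    _ = 0 := by rw [br2']; simp

theorem δ0' (h : XS (-1) E e f Ψ) (A B : R) : δ Ψ A B = 0 := by
  have hE : E * δ Ψ A B = δ Ψ A B := by
    unfold δ
    rw [mul_sub, mul_sub, h.EΨ, ← mul_assoc, h.EΨ, ← mul_assoc, h.comm A, mul_assoc, h.EΨ]
  have s1 : δ Ψ A B * e = 0 := h.r12 _ hE fun T => by
    have := h.br3 A B e (e * T * f) 1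
    simpa only [mul_sub, sub_mul, mul_assoc, h.ee', h.ee, h.ef, h.fe', h.fe, h.ff, mul_zero,
      sub_zero, one_mul] using this
  have s2 : δ Ψ A B * f = 0 := h.r21 _ hE fun T => by
    have := h.br3 A B f (f * T * e) 1
    simpa only [mul_sub, sub_mul, mul_assoc, h.ff', h.ee, h.ef, h.ef', h.fe, h.ff, mul_zero,
      sub_zero, one_mul] using this
  rw [← mul_one (δ Ψ A B), ← h.hsum, mul_add, s1, s2, add_zero]

theorem main (h : XS ξ E e f Ψ) : (∀ A B, Ψ (A + B) = Ψ A + Ψ B) ∧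
    (∀ A B, Ψ (A * B) = Ψ A * B + A * Ψ B) ∧ (∀ A, Ψ (ξ • A) = ξ • Ψ A) := by
  have fin : ∀ A B, δ Ψ A B = 0 → Ψ (A * B) = Ψ A * B + A * Ψ B := fun A B hd => by
    unfold δ at hd
    rw [sub_sub, sub_eq_zero] at hd
    exact hd
  refine ⟨h.additive, ?_⟩
  by_cases hx : ξ ^ 2 = 1
  · have hm : ξ = -1 := by
      rcases mul_eq_zero.1 (show (ξ - 1) * (ξ + 1) = 0 by linear_combination hx) with h' | h'
      · exact absurd (sub_eq_zero.1 h') h.h1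
      · exact eq_neg_of_add_eq_zero_left h'
    subst hm
    exact ⟨fun A B => fin A B (h.δ0' A B), fun A => by rw [neg_one_smul, neg_one_smul, h.neg]⟩
  · exact ⟨fun A B => fin A B (h.δ0 hx A B), fun A => sub_eq_zero.1 (h.τ0 hx A)⟩

end XS
set_option linter.unusedSectionVars false

section Analysis
open ContinuousLinearMap

variable {H : Type*} [NormedAddCommGroup H] [InnerProductSpace ℂ H] [CompleteSpace H]

/-- Projection onto the closed span of a set. -/
noncomputable def spanProj (V : Set H) : H →L[ℂ] H :=
  (Submodule.span ℂ V).topologicalClosure.starProjection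

theorem spanProj_star (V : Set H) : IsStarProjection (spanProj V) :=
  isStarProjection_starProjection

theorem spanProj_apply (V : Set H) (v : H) (hv : v ∈ V) : spanProj V v = v :=
  Submodule.starProjection_eq_self_iff.2
    (Submodule.le_topologicalClosure _ (Submodule.subset_span hv))

theorem span_closed (V : Set H) (y : H →L[ℂ] H) (C : Submodule ℂ H) (hC : IsClosed (C : Set H))
    (h : ∀ v ∈ V, y v ∈ C) (x : H) (hx : x ∈ (Submodule.span ℂ V).topologicalClosure) :
    y x ∈ C := by
  have h1 : (Submodule.span ℂ V).topologicalClosure ≤ C.comap (y : H →ₗ[ℂ] H) := by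
    apply Submodule.topologicalClosure_minimal
    · exact Submodule.span_le.2 fun v hv => h v hv
    · exact hC.preimage y.continuous
  exact h1 hx

theorem spanProj_mem (M : VonNeumannAlgebra H) (V : Set H)
    (h : ∀ y ∈ M.commutant, ∀ v ∈ V, y v ∈ V) : spanProj V ∈ M := by
  rw [VonNeumannAlgebra.IsStarProjection.mem_iff (spanProj_star V)]
  intro y hy
  rw [Module.End.mem_invtSubmodule]
  intro x hx
  have e : (spanProj V).range = (Submodule.span ℂ V).topologicalClosure :=
    Submodule.range_starProjection _
  rw [e] at hx ⊢
  exact span_closed V y _ (Submodule.isClosed_topologicalClosure _)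
    (fun v hv => Submodule.le_topologicalClosure _ (Submodule.subset_span (h y hy v hv))) x hx

theorem spanProj_kill (V : Set H) (x : H →L[ℂ] H) (h : ∀ v ∈ V, x v = 0) : x * spanProj V = 0 := by
  ext v
  have := span_closed V x ⊥ (by simp) (fun v hv => by simpa using h v hv) (spanProj V v)
    (Submodule.starProjection_apply_mem _ _)
  simpa using this

theorem comm_apply {M : VonNeumannAlgebra H} {y T : H →L[ℂ] H} (hy : y ∈ M.commutant) (hT : T ∈ M)
    (v : H) : y (T v) = T (y v) := by
  have := VonNeumannAlgebra.mem_commutant_iff.1 hy T hT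
  exact (congrArg (fun z : H →L[ℂ] H => z v) this).symm

/-- the central projection attached to a subset -/
theorem carrier (M : VonNeumannAlgebra H) (S : Set (H →L[ℂ] H)) (hS : ∀ s ∈ S, s ∈ M) :
    ∃ E, VNCentralProjection M E ∧ (∀ s ∈ S, E * s = s) ∧
      ∀ x, (∀ T ∈ M, ∀ s ∈ S, x * T * s = 0) → x * E = 0 := by
  let V : Set H := {v | ∃ T ∈ M, ∃ s ∈ S, ∃ w, v = T (s w)}
  refine ⟨spanProj V, ⟨⟨?_, (spanProj_star V).isSelfAdjoint, (spanProj_star V).isIdempotentElem⟩,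
    ?_⟩, ?_, ?_⟩
  · apply spanProj_mem
    rintro y hy _ ⟨T, hT, s, hs, w, rfl⟩
    exact ⟨T, hT, s, hs, y w, by rw [comm_apply hy hT, comm_apply hy (hS s hs)]⟩
  · have : spanProj V ∈ M.commutant := by
      apply spanProj_mem
      rw [VonNeumannAlgebra.commutant_commutant]
      rintro y hy _ ⟨T, hT, s, hs, w, rfl⟩
      exact ⟨y * T, mul_mem hy hT, s, hs, w, rfl⟩
    intro T hT
    exact (VonNeumannAlgebra.mem_commutant_iff.1 this T hT).symm
  · intro s hs
    ext w
    exact spanProj_apply V _ ⟨1, one_mem M, s, hs, w, rfl⟩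
  · intro x hx
    apply spanProj_kill
    rintro _ ⟨T, hT, s, hs, w, rfl⟩
    exact congrArg (fun z : H →L[ℂ] H => z w) (hx T hT s hs)

theorem vn_smul (M : VonNeumannAlgebra H) (c : ℂ) {x : H →L[ℂ] H} (hx : x ∈ M) : c • x ∈ M :=
  M.toStarSubalgebra.smul_mem (x := x) hx c

theorem posPart_mem (M : VonNeumannAlgebra H) {a : H →L[ℂ] H} (ha : a ∈ M) : a⁺ ∈ M := by
  rw [← VonNeumannAlgebra.commutant_commutant M, VonNeumannAlgebra.mem_commutant_iff]
  intro y hy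
  have h1 : Commute a y := VonNeumannAlgebra.mem_commutant_iff.1 hy a ha
  rw [CFC.posPart_def]
  exact (h1.cfcₙ_real _).symm

theorem half_norm (a : H →L[ℂ] H) (ha : 0 ≤ a) (r : ℝ) (hr : ‖a‖ ≤ r) :
    ‖a - ((r / 2 : ℝ) : ℂ) • 1‖ ≤ r / 2 := by
  have h0 : 0 ≤ r := (norm_nonneg _).trans hr
  have e : a - ((r / 2 : ℝ) : ℂ) • 1 = cfc (fun x : ℝ => x - r / 2) a := by
    rw [cfc_sub (fun x : ℝ => x) (fun _ => r / 2) a, cfc_id' ℝ a, cfc_const (r / 2) a,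
      Algebra.algebraMap_eq_smul_one, Complex.coe_smul]
  rw [e]
  apply norm_cfc_le (by positivity)
  intro x hx
  have h1 : 0 ≤ x := spectrum_nonneg_of_nonneg ha hx
  have h2 : x ≤ ‖a‖ := by
    have h3 := spectrum.norm_le_norm_mul_of_mem hx
    have h4 : ‖(1 : H →L[ℂ] H)‖ ≤ 1 := ContinuousLinearMap.norm_id_le
    calc x ≤ ‖x‖ := le_abs_self x
      _ ≤ ‖a‖ * ‖(1 : H →L[ℂ] H)‖ := h3
      _ ≤ ‖a‖ * 1 := by gcongr
      _ = ‖a‖ := mul_one _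
  rw [Real.norm_eq_abs, abs_le]
  constructor <;> linarith

theorem glue (F X Y : H →L[ℂ] H) (hF : IsStarProjection F) (m : ℝ) (hm : 0 ≤ m)
    (hX : ‖X‖ ≤ m) (hY : ‖Y‖ ≤ m) : ‖F * X * F + (1 - F) * Y * (1 - F)‖ ≤ m := by
  have orth : ∀ u v : H, ‖F u + (1 - F) v‖ ^ 2 = ‖F u‖ ^ 2 + ‖(1 - F) v‖ ^ 2 := fun u v => by
    rw [pow_two, pow_two, pow_two]
    apply norm_add_sq_eq_norm_sq_add_norm_sq_of_inner_eq_zero (𝕜 := ℂ)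
    have : inner ℂ (F u) ((1 - F) v) = inner ℂ u (F ((1 - F) v)) := by
      have hs := hF.isSelfAdjoint.star_eq
      rw [ContinuousLinearMap.star_eq_adjoint] at hs
      nth_rw 1 [← hs]
      exact ContinuousLinearMap.adjoint_inner_left _ _ _
    rw [this]
    have h2 : F ((1 - F) v) = (F * (1 - F)) v := rfl
    rw [h2, mul_sub, mul_one, hF.isIdempotentElem.eq, sub_self]
    simp
  have nF : ∀ u : H, ‖F u‖ ≤ ‖u‖ ∧ ‖(1 - F) u‖ ≤ ‖u‖ := fun u => by
    have := orth u u
    have e : F u + (1 - F) u = u := by simp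
    rw [e] at this
    constructor
    · exact (sq_le_sq₀ (norm_nonneg _) (norm_nonneg _)).1 (by nlinarith [sq_nonneg ‖(1 - F) u‖])
    · exact (sq_le_sq₀ (norm_nonneg _) (norm_nonneg _)).1 (by nlinarith [sq_nonneg ‖F u‖])
  apply ContinuousLinearMap.opNorm_le_bound _ hm
  intro u
  have k := orth (X (F u)) (Y ((1 - F) u))
  have k2 := orth u u
  have e : F u + (1 - F) u = u := by simp
  rw [e] at k2
  have b1 : ‖F (X (F u))‖ ≤ m * ‖F u‖ :=
    (nF _).1.trans (X.le_of_opNorm_le hX _)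
  have b2 : ‖(1 - F) (Y ((1 - F) u))‖ ≤ m * ‖(1 - F) u‖ :=
    (nF _).2.trans (Y.le_of_opNorm_le hY _)
  change ‖F (X (F u)) + (1 - F) (Y ((1 - F) u))‖ ≤ m * ‖u‖
  rw [← sq_le_sq₀ (norm_nonneg _) (by positivity), k, mul_pow, k2, mul_add, ← mul_pow, ← mul_pow]
  gcongr

theorem comm_bound (M : VonNeumannAlgebra H) (Z : H →L[ℂ] H) (hZ : VNCentralProjection M Z)
    (hP : ∀ P, VNProjection M P → ∀ T ∈ M, Z * P * T = T * (Z * P)) (B : H →L[ℂ] H) (hB : B ∈ M)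
    (n : ℕ) : ∀ A ∈ M, IsSelfAdjoint A → ∀ r, ‖A‖ ≤ r →
      ‖Z * (A * B - B * A)‖ ≤ 2 * r * ‖B‖ / 2 ^ n := by
  have nZ : ‖Z‖ ≤ 1 := by
    have hs : IsStarProjection Z := ⟨hZ.1.2.2, hZ.1.2.1⟩
    exact hs.norm_le
  induction n with
  | zero =>
    intro A hA hs r hr
    have h0 : 0 ≤ r := (norm_nonneg _).trans hr
    calc ‖Z * (A * B - B * A)‖ ≤ ‖Z‖ * ‖A * B - B * A‖ := norm_mul_le _ _
      _ ≤ 1 * (‖A‖ * ‖B‖ + ‖B‖ * ‖A‖) := by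
        gcongr
        exact (norm_sub_le _ _).trans (add_le_add (norm_mul_le _ _) (norm_mul_le _ _))
      _ ≤ 1 * (r * ‖B‖ + ‖B‖ * r) := by gcongr
      _ = _ := by simp; ring
  | succ n ih =>
    intro A hA hs r hr
    have h0 : 0 ≤ r := (norm_nonneg _).trans hr
    have hAp : A⁺ ∈ M := posPart_mem M hA
    have hsub : A⁺ - A⁻ = A := CFC.posPart_sub_negPart A hs
    have hAn : A⁻ ∈ M := by
      have : A⁻ = A⁺ - A := by nth_rw 3 [← hsub]; abel
      rw [this]; exact sub_mem hAp hA
    let V : Set H := {v | ∃ w, v = A⁺ w}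
    set F := spanProj V with hF
    have Fs : IsStarProjection F := spanProj_star V
    have FM : F ∈ M := by
      apply spanProj_mem
      rintro y hy _ ⟨w, rfl⟩
      exact ⟨y w, comm_apply hy hAp w⟩
    have F1 : F * A⁺ = A⁺ := by
      ext w; exact spanProj_apply V _ ⟨w, rfl⟩
    have F2 : A⁻ * F = 0 := by
      apply spanProj_kill
      rintro _ ⟨w, rfl⟩
      exact congrArg (fun z : H →L[ℂ] H => z w) (CFC.negPart_mul_posPart A)
    have F2' : F * A⁻ = 0 := by
      have := congrArg star F2
      rwa [star_mul, Fs.isSelfAdjoint.star_eq, (CFC.negPart_nonneg A).isSelfAdjoint.star_eq,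
        star_zero] at this
    set c : ℂ := ((r / 2 : ℝ) : ℂ) with hc
    have cs : IsSelfAdjoint (c • (1 : H →L[ℂ] H)) := by
      apply IsSelfAdjoint.smul
      · rw [hc]; exact Complex.conj_ofReal _
      · exact IsSelfAdjoint.one _
    have cM : c • (1 : H →L[ℂ] H) ∈ M := vn_smul M c (one_mem M)
    have i1 := ih (A⁺ - c • 1) (sub_mem hAp cM) ((CFC.posPart_nonneg A).isSelfAdjoint.sub cs) (r / 2)
      (half_norm _ (CFC.posPart_nonneg A) r ((CStarAlgebra.norm_posPart_le A).trans hr))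
    have i2 := ih (A⁻ - c • 1) (sub_mem hAn cM) ((CFC.negPart_nonneg A).isSelfAdjoint.sub cs) (r / 2)
      (half_norm _ (CFC.negPart_nonneg A) r ((CStarAlgebra.norm_negPart_le A).trans hr))
    have s1 : ∀ a : H →L[ℂ] H, (a - c • 1) * B - B * (a - c • 1) = a * B - B * a := fun a => by
      simp only [sub_mul, mul_sub, smul_mul_assoc, mul_smul_comm, one_mul, mul_one]; abel
    rw [s1] at i1 i2
    have cF := hP F ⟨FM, Fs.isSelfAdjoint, Fs.isIdempotentElem⟩
    have FF : F * F = F := Fs.isIdempotentElem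
    have ZZ : Z * Z = Z := hZ.1.2.2
    have ZF : Z * F = F * Z := hZ.2 F FM
    have key : ∀ X ∈ M, F * (Z * X) * F = Z * F * X := fun X hX => by
      rw [← mul_assoc, ← ZF, cF X hX, mul_assoc, mul_assoc, FF]
    have key2 : ∀ X ∈ M, (1 - F) * (Z * X) * (1 - F) = Z * X - Z * F * X := fun X hX => by
      have k1 : Z * X * F = Z * F * X := by
        rw [cF X hX, hZ.2 X hX, mul_assoc]
      have k2 : F * (Z * X) = Z * F * X := by rw [← mul_assoc, ← ZF]
      rw [mul_sub, mul_one, sub_mul, one_mul, k2, sub_mul, k1, cF X hX, mul_assoc, mul_assoc, FF]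
      simp
    have m1 : A⁺ * B - B * A⁺ ∈ M := sub_mem (mul_mem hAp hB) (mul_mem hB hAp)
    have m2 : A⁻ * B - B * A⁻ ∈ M := sub_mem (mul_mem hAn hB) (mul_mem hB hAn)
    have g := glue F (Z * (A⁺ * B - B * A⁺)) (-(Z * (A⁻ * B - B * A⁻))) Fs _ (by positivity) i1
      (by rw [norm_neg]; exact i2)
    rw [key _ m1, mul_neg, neg_mul, key2 _ m2] at g
    have e1 : Z * F * (A⁺ * B - B * A⁺) = Z * (A⁺ * B - B * A⁺) := by
      have : Z * F * (B * A⁺) = Z * (B * A⁺) := by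
        rw [← mul_assoc, cF B hB, mul_assoc, mul_assoc, F1, ← mul_assoc, ← hZ.2 B hB, mul_assoc]
      rw [mul_sub, this, mul_sub, mul_assoc Z F, ← mul_assoc F, F1]
    have e2 : Z * F * (A⁻ * B - B * A⁻) = 0 := by
      have : Z * F * (B * A⁻) = 0 := by
        rw [← mul_assoc, cF B hB, mul_assoc, mul_assoc, F2', mul_zero, mul_zero]
      rw [mul_sub, this, mul_assoc Z F, ← mul_assoc F, F2']; simp
    rw [e1, e2, sub_zero, ← sub_eq_add_neg, ← mul_sub] at g
    have e3 : A⁺ * B - B * A⁺ - (A⁻ * B - B * A⁻) = A * B - B * A := by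
      nth_rw 5 6 [← hsub]
      simp only [sub_mul, mul_sub]; abel
    rw [e3] at g
    refine g.trans (le_of_eq ?_)
    rw [pow_succ]; ring

theorem comm_zero (M : VonNeumannAlgebra H) (Z : H →L[ℂ] H) (hZ : VNCentralProjection M Z)
    (hP : ∀ P, VNProjection M P → ∀ T ∈ M, Z * P * T = T * (Z * P)) (A B : H →L[ℂ] H)
    (hA : A ∈ M) (hB : B ∈ M) : Z * (A * B - B * A) = 0 := by
  have sa : ∀ A ∈ M, IsSelfAdjoint A → Z * (A * B - B * A) = 0 := fun A hA hs => by
    have hb := fun n => comm_bound M Z hZ hP B hB n A hA hs _ le_rfl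
    have lim : Filter.Tendsto (fun n : ℕ => 2 * ‖A‖ * ‖B‖ / (2 : ℝ) ^ n) Filter.atTop (nhds 0) := by
      have := (tendsto_pow_atTop_nhds_zero_of_lt_one (r := (1 / 2 : ℝ)) (by norm_num)
        (by norm_num)).const_mul (2 * ‖A‖ * ‖B‖)
      rw [mul_zero] at this
      refine this.congr fun n => ?_
      rw [div_pow, one_pow]; ring
    exact norm_le_zero_iff.1 (ge_of_tendsto' lim hb)
  have hA' : star A ∈ M := star_mem hA
  have h1 := sa (A + star A) (add_mem hA hA') (IsSelfAdjoint.add_star_self A)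
  have h2 := sa (Complex.I • (A - star A)) (vn_smul M _ (sub_mem hA hA')) (by
    rw [IsSelfAdjoint, star_smul, star_sub, star_star]
    simp only [RCLike.star_def, Complex.conj_I, neg_smul, ← smul_neg, neg_sub])
  rw [smul_mul_assoc, mul_smul_comm, ← smul_sub, mul_smul_comm] at h2
  have h3 := (smul_eq_zero.1 h2).resolve_left Complex.I_ne_zero
  have h4 : (2 : ℂ) • (Z * (A * B - B * A)) = Z * ((A + star A) * B - B * (A + star A))
      + Z * ((A - star A) * B - B * (A - star A)) := by
    rw [two_smul]
    simp only [mul_add, add_mul, mul_sub, sub_mul]; abel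
  rw [h1, h3, add_zero] at h4
  exact (smul_eq_zero.1 h4).resolve_left two_ne_zero

/-- elements killed on all `P M (1 - P)` vanish -/
theorem nondeg (M : VonNeumannAlgebra H) (hM : VNNoTypeI1 M) (x : H →L[ℂ] H)
    (hx : ∀ P, VNProjection M P → ∀ T ∈ M, ∀ T' ∈ M, x * T' * (P * T * (1 - P)) = 0) : x = 0 := by
  obtain ⟨E, hE, h1, h2⟩ := carrier M {s | ∃ P T, VNProjection M P ∧ T ∈ M ∧ s = P * T * (1 - P)}
    (by
      rintro _ ⟨P, T, hP, hT, rfl⟩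
      exact mul_mem (mul_mem hP.1 hT) (sub_mem (one_mem M) hP.1))
  have hZ : VNCentralProjection M (1 - E) := by
    refine ⟨⟨sub_mem (one_mem M) hE.1.1, (IsSelfAdjoint.one _).sub hE.1.2.1, ?_⟩, fun T hT => ?_⟩
    · simp only [mul_sub, sub_mul, hE.1.2.2, one_mul, mul_one, sub_self, sub_zero]
    · simp only [mul_sub, sub_mul, hE.2 T hT, one_mul, mul_one]
  have hz : 1 - E = 0 := by
    by_contra hne
    obtain ⟨A, hA, B, hB, hAB⟩ := hM _ hZ hne
    apply hAB
    refine comm_zero M _ hZ (fun P hP T hT => ?_) A B hA hB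
    have k : ∀ T ∈ M, (1 - E) * (P * T * (1 - P)) = 0 := fun T hT => by
      rw [sub_mul, one_mul, h1 _ ⟨P, T, hP, hT, rfl⟩, sub_self]
    have k1 : (1 - E) * P * T = (1 - E) * P * T * P := by
      have := k T hT
      rw [mul_sub, mul_one, mul_sub, sub_eq_zero] at this
      simpa only [mul_assoc] using this
    have k2 : T * ((1 - E) * P) = (1 - E) * P * T * P := by
      have := congrArg star (k (star T) (star_mem hT))
      simp only [star_mul, star_star, star_zero, hP.2.1.star_eq, hZ.1.2.1.star_eq, star_sub,
        star_one] at this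
      rw [← hZ.2 _ (mul_mem (sub_mem (one_mem M) hP.1) (mul_mem hT hP.1)), sub_mul 1 P,
        one_mul, mul_sub, sub_eq_zero] at this
      rw [← mul_assoc, ← hZ.2 T hT, mul_assoc, this]
      simp only [mul_assoc]
    rw [k1, k2]
  have : x * E = 0 := h2 x fun T' hT' s hs => by
    obtain ⟨P, T, hP, hT, rfl⟩ := hs
    exact hx P hP T hT T' hT'
  rw [← sub_eq_zero.1 hz, mul_one] at this
  exact this

end Analysis
section Final

theorem sp_aux (s : H →L[ℂ] H) (h : s * star s * s = 0) : s = 0 := by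
  have h2 : star (star s * s) * (star s * s) = 0 := by
    rw [star_mul, star_star, mul_assoc, ← mul_assoc s, h, mul_zero]
  exact CStarRing.star_mul_self_eq_zero_iff s |>.1
    ((CStarRing.star_mul_self_eq_zero_iff (star s * s)).1 h2)

theorem key (M : VonNeumannAlgebra H) (ξ : ℂ) (hξ0 : ξ ≠ 0) (hξ1 : ξ ≠ 1)
    (Φ : (H →L[ℂ] H) → (H →L[ℂ] H))
    (hmaps : ∀ T ∈ M, Φ T ∈ M)
    (hlie : ∀ A ∈ M, ∀ B ∈ M,
      Φ (A * B - ξ • (B * A)) =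
        (Φ A * B - ξ • (B * Φ A)) + (A * Φ B - ξ • (Φ B * A)))
    (P : H →L[ℂ] H) (hP : VNProjection M P) :
    ∃ E, VNCentralProjection M E ∧ (∀ T ∈ M, E * (P * T * (1 - P)) = P * T * (1 - P)) ∧
    (∀ T ∈ M, ∀ S ∈ M, E * Φ (T + S) = E * Φ T + E * Φ S) ∧
      (∀ A ∈ M, ∀ B ∈ M, E * Φ (A * B) = E * Φ A * B + A * (E * Φ B)) ∧
      (∀ T ∈ M, E * Φ (ξ • T) = ξ • (E * Φ T)) := by
  have hQ : 1 - P ∈ M := sub_mem (one_mem M) hP.1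
  obtain ⟨E, hE, hE1, hE2⟩ := carrier M {s | ∃ T ∈ M, s = P * T * (1 - P)} (by
    rintro s ⟨T, hT, rfl⟩
    exact mul_mem (mul_mem hP.1 hT) hQ)
  refine ⟨E, hE, fun T hT => hE1 _ ⟨T, hT, rfl⟩, ?_⟩
  have hEM := hE.1.1
  have PQ : P * (1 - P) = 0 := by rw [mul_sub, mul_one, hP.2.2, sub_self]
  have QP : (1 - P) * P = 0 := by rw [sub_mul, one_mul, hP.2.2, sub_self]
  have QQ : (1 - P) * (1 - P) = 1 - P := by rw [mul_sub, QP, mul_one, sub_zero]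
  have Qs : star (1 - P) = 1 - P := by rw [star_sub, star_one, hP.2.1.star_eq]
  have Ps : star P = P := hP.2.1.star_eq
  -- faithfulness
  have R12 : ∀ s ∈ M, E * s = s → (∀ T ∈ M, s * P * T * (1 - P) = 0) → s * P = 0 := by
    intro s hs hEs h
    have : s * P * E = 0 := hE2 _ (by
      rintro T hT _ ⟨T1, hT1, rfl⟩
      have := h (T * (P * T1)) (mul_mem hT (mul_mem hP.1 hT1))
      simpa only [mul_assoc] using this)
    rwa [← hE.2 _ (mul_mem hs hP.1), ← mul_assoc, hEs] at this
  have R21 : ∀ s ∈ M, E * s = s → (∀ T ∈ M, s * (1 - P) * T * P = 0) → s * (1 - P) = 0 := by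
    intro s hs hEs h
    have : s * (1 - P) * E = 0 := hE2 _ (by
      rintro T hT _ ⟨T1, hT1, rfl⟩
      have := congrArg (· * (T1 * (1 - P))) (h T hT)
      simpa only [mul_assoc, zero_mul] using this)
    rwa [← hE.2 _ (mul_mem hs hQ), ← mul_assoc, hEs] at this
  have ES : ∀ s ∈ M, E * s = s → E * star s = star s := by
    intro s hs hEs
    have := congrArg star hEs
    rwa [star_mul, hE.1.2.1.star_eq, ← hE.2 _ (star_mem hs)] at this
  have L12 : ∀ s ∈ M, E * s = s → (∀ T ∈ M, P * T * (1 - P) * s = 0) → (1 - P) * s = 0 := by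
    intro s hs hEs h
    have := R21 (star s) (star_mem hs) (ES s hs hEs) (fun T hT => by
      have := congrArg star (h (star T) (star_mem hT))
      simpa only [star_mul, star_star, Ps, Qs, star_zero, mul_assoc] using this)
    have := congrArg star this
    simpa only [star_mul, star_star, Ps, Qs, star_zero] using this
  have L21 : ∀ s ∈ M, E * s = s → (∀ T ∈ M, (1 - P) * T * P * s = 0) → P * s = 0 := by
    intro s hs hEs h
    have := R12 (star s) (star_mem hs) (ES s hs hEs) (fun T hT => by
      have := congrArg star (h (star T) (star_mem hT))
      simpa only [star_mul, star_star, Ps, Qs, star_zero, mul_assoc] using this)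
    have := congrArg star this
    simpa only [star_mul, star_star, Ps, Qs, star_zero] using this
  let R := M.toStarSubalgebra
  let Ψ : R → R := fun A => ⟨E * Φ A.1, mul_mem (S := VonNeumannAlgebra H) hEM (hmaps A.1 A.2)⟩
  have X : XS (R := R) ξ ⟨E, hEM⟩ ⟨P, hP.1⟩ ⟨1 - P, hQ⟩ Ψ := by
    refine ⟨hξ0, hξ1, ?_, ?_, ?_, ?_, ?_, ?_, ?_, ?_, ?_, ?_, ?_, ?_, ?_⟩
    · exact Subtype.ext (add_sub_cancel P 1)
    · exact Subtype.ext hP.2.2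
    · exact Subtype.ext QQ
    · exact Subtype.ext PQ
    · exact Subtype.ext QP
    · exact fun x => Subtype.ext (hE.2 x.1 x.2)
    · intro x
      apply Subtype.ext
      show E * (E * Φ x.1) = E * Φ x.1
      rw [← mul_assoc, hE.1.2.2]
    · intro A B
      apply Subtype.ext
      show E * Φ (A.1 * B.1 - ξ • (B.1 * A.1)) = (E * Φ A.1 * B.1 - ξ • (B.1 * (E * Φ A.1)))
        + (A.1 * (E * Φ B.1) - ξ • (E * Φ B.1 * A.1))
      rw [hlie A.1 A.2 B.1 B.2, ← mul_assoc B.1, ← hE.2 B.1 B.2, ← mul_assoc A.1,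
        ← hE.2 A.1 A.2]
      simp only [mul_add, mul_sub, mul_smul_comm, mul_assoc]
    · intro s hs h
      exact Subtype.ext (R12 s.1 s.2 (congrArg Subtype.val hs)
        fun T hT => congrArg Subtype.val (h ⟨T, hT⟩))
    · intro s hs h
      exact Subtype.ext (R21 s.1 s.2 (congrArg Subtype.val hs)
        fun T hT => congrArg Subtype.val (h ⟨T, hT⟩))
    · intro s hs h
      exact Subtype.ext (L12 s.1 s.2 (congrArg Subtype.val hs)
        fun T hT => congrArg Subtype.val (h ⟨T, hT⟩))
    · intro s hs h
      exact Subtype.ext (L21 s.1 s.2 (congrArg Subtype.val hs)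
        fun T hT => congrArg Subtype.val (h ⟨T, hT⟩))
    · intro s h
      exact Subtype.ext (sp_aux s.1 (congrArg Subtype.val (h (star s))))
  obtain ⟨a, b, c⟩ := X.main
  exact ⟨fun T hT S hS => congrArg Subtype.val (a ⟨T, hT⟩ ⟨S, hS⟩),
    fun T hT S hS => congrArg Subtype.val (b ⟨T, hT⟩ ⟨S, hS⟩),
    fun T hT => congrArg Subtype.val (c ⟨T, hT⟩)⟩

theorem defect_zero (M : VonNeumannAlgebra H) (hM : VNNoTypeI1 M) (d : H →L[ℂ] H) (hd : d ∈ M)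
    (h : ∀ P, VNProjection M P → ∃ E, VNCentralProjection M E ∧
      (∀ T ∈ M, E * (P * T * (1 - P)) = P * T * (1 - P)) ∧ E * d = 0) : d = 0 := by
  refine nondeg M hM d fun P hP T hT S hS => ?_
  obtain ⟨E, hE, h1, h2⟩ := h P hP
  rw [← h1 T hT, ← mul_assoc, ← hE.2 _ (mul_mem hd hS), ← mul_assoc E d, h2, zero_mul, zero_mul]

end Final

/-- **Theorem 1.2.** Every nonlinear ξ-Lie derivation (ξ ≠ 0, 1) on a von Neumann
algebra with no central summands of type I₁ is an additive derivation with
`Φ (ξ • T) = ξ • Φ T`. -/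
theorem nonlinear_xiLie_derivation_additive (M : VonNeumannAlgebra H)
    (hM : VNNoTypeI1 M) (ξ : ℂ) (hξ0 : ξ ≠ 0) (hξ1 : ξ ≠ 1)
    (Φ : (H →L[ℂ] H) → (H →L[ℂ] H))
    (hmaps : ∀ T ∈ M, Φ T ∈ M)
    (hlie : ∀ A ∈ M, ∀ B ∈ M,
      Φ (A * B - ξ • (B * A)) =
        (Φ A * B - ξ • (B * Φ A)) + (A * Φ B - ξ • (Φ B * A))) :
    (∀ T ∈ M, ∀ S ∈ M, Φ (T + S) = Φ T + Φ S) ∧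
      (∀ A ∈ M, ∀ B ∈ M, Φ (A * B) = Φ A * B + A * Φ B) ∧
      (∀ T ∈ M, Φ (ξ • T) = ξ • Φ T) := by

  have K := key M ξ hξ0 hξ1 Φ hmaps hlie
  refine ⟨fun T hT S hS => ?_, fun T hT S hS => ?_, fun T hT => ?_⟩
  · refine sub_eq_zero.1 (defect_zero M hM _ (sub_mem (hmaps _ (add_mem hT hS))
      (add_mem (hmaps _ hT) (hmaps _ hS))) fun P hP => ?_)
    obtain ⟨E, hE, h1, h2, -, -⟩ := K P hP
    exact ⟨E, hE, h1, by rw [mul_sub, mul_add, h2 T hT S hS, sub_self]⟩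
  · refine sub_eq_zero.1 (defect_zero M hM _ (sub_mem (hmaps _ (mul_mem hT hS))
      (add_mem (mul_mem (hmaps _ hT) hS) (mul_mem hT (hmaps _ hS)))) fun P hP => ?_)
    obtain ⟨E, hE, h1, -, h2, -⟩ := K P hP
    refine ⟨E, hE, h1, ?_⟩
    rw [mul_sub, mul_add, h2 T hT S hS, mul_assoc E (Φ T) S, ← mul_assoc E T, hE.2 T hT, mul_assoc T,
      sub_self]
  · refine sub_eq_zero.1 (defect_zero M hM _ (sub_mem (hmaps _ (vn_smul M ξ hT))
      (vn_smul M ξ (hmaps _ hT))) fun P hP => ?_)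
    obtain ⟨E, hE, h1, -, -, h2⟩ := K P hP
    exact ⟨E, hE, h1, by rw [mul_sub, mul_smul_comm, h2 T hT, sub_self]⟩
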